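/- arXiv:1810.04209 — 2 statements merged into one kernel-verified Lean document; each statement's English description precedes it below -/
import Mathlib

section
/- Under the hypotheses of the Ψ-Gronwall inequality (u, v nonnegative integrable, g nonnegative nondecreasing continuous, u(t) ≤ v(t) + g(t)∫_a^t Ψ'(s)(Ψ(t)-Ψ(s))^{μ-1} u(s) ds), if in addition v is nondecreasing on [a,b], then u(t) ≤ v(t) · E_μ(g(t)Γ(μ)(Ψ(t)-Ψ(a))^μ) for all t ∈ [a,b], where E_μ(z) = Σ_{k=0}^∞ z^k/Γ(μk+1) is the one-parameter Mittag-Leffler function. -/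
open Set Real MeasureTheory

/-- The one-parameter Mittag-Leffler function `E_μ(z) = Σ_{k≥0} z^k / Γ(μk+1)`. -/
noncomputable def mittagLeffler (μ z : ℝ) : ℝ :=
  ∑' k : ℕ, z ^ k / Real.Gamma (μ * k + 1)

/-!
On `[a, t]` the monotone functions `v` and `g` are bounded by the constants `v t` and `g t`.
Substituting `Ψ` turns the inequality into one for the Abel kernel `(x - y)₊ ^ (μ - 1)` and the
measure `dΨ = Ψ' dx`, whose image under `Ψ` is at most Lebesgue measure. Since the kernels
`x₊ ^ (c - 1) / Γ(c)` form a convolution semigroup, `v t * E_μ(g t * Γ(μ) * (Ψ - Ψ a) ^ μ)` is a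
supersolution. In `L¹` with the weight `exp (-l Ψ)`, `l` large, the integral operator is a
contraction, so a subsolution lies below every supersolution almost everywhere; inserting this
bound once more in the integral makes it hold at every point.
-/

open ProbabilityTheory
open scoped ENNReal NNReal

section MittagLeffler

variable {μ : ℝ}

lemma rpow_mul_exp_neg_le_Gamma_add_one {x R : ℝ} (hx : 0 ≤ x) (hR : 0 ≤ R) :
    R ^ x * exp (-R) ≤ Gamma (x + 1) := by
  have h_int : IntegrableOn (fun t ↦ exp (-t) * t ^ x) (Ioi 0) := by
    simpa using GammaIntegral_convergent (s := x + 1) (by positivity)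
  calc R ^ x * exp (-R) = ∫ t in Ioi R, exp (-t) * R ^ x := by
        rw [integral_mul_const, integral_exp_neg_Ioi, mul_comm]
    _ ≤ ∫ t in Ioi R, exp (-t) * t ^ x := by
        refine setIntegral_mono_on ((integrableOn_exp_neg_Ioi R).mul_const _)
          (h_int.mono_set (Ioi_subset_Ioi hR)) measurableSet_Ioi fun t ht ↦ ?_
        gcongr
        exact le_of_lt ht
    _ ≤ ∫ t in Ioi 0, exp (-t) * t ^ x := by
        refine setIntegral_mono_set h_int ?_ (Ioi_subset_Ioi hR).eventuallyLE
        filter_upwards [ae_restrict_mem measurableSet_Ioi] with t (ht : 0 < t)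
        exact mul_nonneg (exp_nonneg _) (rpow_nonneg ht.le _)
    _ = Gamma (x + 1) := by simp [Gamma_eq_integral (by positivity : 0 < x + 1)]

lemma summable_mittagLeffler (hμ : 0 < μ) (z : ℝ) :
    Summable fun k : ℕ ↦ z ^ k / Gamma (μ * k + 1) := by
  set R : ℝ := (|z| + 1) ^ μ⁻¹
  have hR : 0 < R := by positivity
  have hRμ : R ^ μ = |z| + 1 := rpow_inv_rpow (by positivity) hμ.ne'
  have hq : |z| / (|z| + 1) < 1 := (div_lt_one (by positivity)).2 (lt_add_one _)
  refine Summable.of_norm_bounded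
    ((summable_geometric_of_lt_one (by positivity) hq).mul_left (exp R)) fun k ↦ ?_
  have h_le : (|z| + 1) ^ k * exp (-R) ≤ Gamma (μ * k + 1) := by
    simpa [rpow_mul hR.le, hRμ] using
      rpow_mul_exp_neg_le_Gamma_add_one (x := μ * k) (by positivity) hR.le
  calc ‖z ^ k / Gamma (μ * k + 1)‖ = |z| ^ k / Gamma (μ * k + 1) := by
        rw [norm_div, norm_pow, norm_eq_abs, norm_of_nonneg (by positivity)]
    _ ≤ |z| ^ k / ((|z| + 1) ^ k * exp (-R)) := by gcongr
    _ = exp R * (|z| / (|z| + 1)) ^ k := by rw [exp_neg, div_pow]; field_simp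

lemma mittagLeffler_nonneg (hμ : 0 < μ) {z : ℝ} (hz : 0 ≤ z) : 0 ≤ mittagLeffler μ z :=
  tsum_nonneg fun k ↦ by positivity

end MittagLeffler

section RiemannLiouvilleKernel

/-- The kernel `x₊^(c-1) / Γ(c)` of the Riemann-Liouville integral of order `c`. It is valued in
`ℝ≥0∞` so that its integrals need no integrability side conditions. At `x = 0` it takes the value
`0 ^ (c - 1) / Γ(c)`, which is `1` for `c = 1` and `0` for every other `c`. -/
noncomputable def riemannLiouvilleKernel (c x : ℝ) : ℝ≥0∞ :=
  if 0 ≤ x then ENNReal.ofReal (x ^ (c - 1) / Gamma c) else 0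

variable {c d x : ℝ}

@[fun_prop]
lemma measurable_riemannLiouvilleKernel (c : ℝ) : Measurable (riemannLiouvilleKernel c) :=
  Measurable.ite measurableSet_Ici (by fun_prop) measurable_const

lemma riemannLiouvilleKernel_of_nonneg (hx : 0 ≤ x) :
    riemannLiouvilleKernel c x = ENNReal.ofReal (x ^ (c - 1) / Gamma c) := if_pos hx

lemma riemannLiouvilleKernel_of_neg (hx : x < 0) : riemannLiouvilleKernel c x = 0 :=
  if_neg hx.not_ge

lemma riemannLiouvilleKernel_one_of_nonneg (hx : 0 ≤ x) : riemannLiouvilleKernel 1 x = 1 := by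
  simp [riemannLiouvilleKernel_of_nonneg hx]

lemma lintegral_exp_neg_mul_riemannLiouvilleKernel {l : ℝ} (hc : 0 < c) (hl : 0 < l) :
    ∫⁻ x, ENNReal.ofReal (exp (-(l * x))) * riemannLiouvilleKernel c x =
      ENNReal.ofReal (l ^ c)⁻¹ := by
  have h_gamma (x : ℝ) : ENNReal.ofReal (exp (-(l * x))) * riemannLiouvilleKernel c x =
      ENNReal.ofReal (l ^ c)⁻¹ * gammaPDF c l x := by
    rcases lt_or_ge x 0 with hx | hx
    · rw [riemannLiouvilleKernel_of_neg hx, gammaPDF_of_neg hx, mul_zero, mul_zero]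
    · rw [riemannLiouvilleKernel_of_nonneg hx, gammaPDF_of_nonneg hx,
        ← ENNReal.ofReal_mul (by positivity), ← ENNReal.ofReal_mul (by positivity)]
      congr 1
      field_simp
  simp_rw [h_gamma]
  rw [lintegral_const_mul' _ _ ENNReal.ofReal_ne_top,
    lintegral_gammaPDF_eq_one hc hl, mul_one]

lemma riemannLiouvilleKernel_mul_eq_betaPDF (hc : 0 < c) (hd : 0 < d) (hx : 0 < x) {z : ℝ}
    (hz0 : z ≠ 0) (hz1 : z ≠ 1) :
    ENNReal.ofReal x * (riemannLiouvilleKernel c (x - x * z) * riemannLiouvilleKernel d (x * z)) =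
      riemannLiouvilleKernel (c + d) x * betaPDF d c z := by
  rcases hz0.lt_or_gt with hz | hz
  · rw [riemannLiouvilleKernel_of_neg (mul_neg_of_pos_of_neg hx hz),
      betaPDF_eq_zero_of_nonpos hz.le, mul_zero, mul_zero, mul_zero]
  rcases hz1.lt_or_gt with hz' | hz'
  · have h1z : 0 < 1 - z := sub_pos.2 hz'
    have h_pow : x ^ (c + d - 1) = x * (x ^ (c - 1) * x ^ (d - 1)) := by
      rw [show c + d - 1 = 1 + ((c - 1) + (d - 1)) by ring, rpow_add hx, rpow_add hx, rpow_one]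
    rw [← mul_one_sub, riemannLiouvilleKernel_of_nonneg (by positivity),
      riemannLiouvilleKernel_of_nonneg (by positivity), riemannLiouvilleKernel_of_nonneg hx.le,
      betaPDF_of_pos_lt_one hz hz', ← ENNReal.ofReal_mul (by positivity),
      ← ENNReal.ofReal_mul hx.le, ← ENNReal.ofReal_mul (by positivity), h_pow,
      mul_rpow hx.le h1z.le, mul_rpow hx.le hz.le, beta, add_comm d c]
    congr 1
    field_simp
  · rw [riemannLiouvilleKernel_of_neg (by nlinarith),
      betaPDF_eq_zero_of_one_le hz'.le, zero_mul, mul_zero, mul_zero]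

lemma lintegral_eq_ofReal_mul_lintegral_comp_mul_left (hx : 0 < x) (f : ℝ → ℝ≥0∞) :
    ∫⁻ y, f y = ENNReal.ofReal x * ∫⁻ z, f (x * z) := by
  have h_image : (fun z ↦ x * z) '' univ = univ :=
    image_univ_of_surjective (mul_left_surjective₀ hx.ne')
  have h_sub := lintegral_image_eq_lintegral_abs_deriv_mul (f' := fun _ ↦ x) MeasurableSet.univ
    (fun z _ ↦ (hasDerivAt_const_mul x).hasDerivWithinAt)
    (mul_right_injective₀ hx.ne').injOn f
  rwa [h_image, setLIntegral_univ, setLIntegral_univ,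
    lintegral_const_mul' _ _ ENNReal.ofReal_ne_top, abs_of_pos hx] at h_sub

/-- At `x = 0` the convolution vanishes, while the right-hand side is `1` if `c + d = 1`. -/
lemma lintegral_riemannLiouvilleKernel_sub_mul_le (hc : 0 < c) (hd : 0 < d) (x : ℝ) :
    ∫⁻ y, riemannLiouvilleKernel c (x - y) * riemannLiouvilleKernel d y ≤
      riemannLiouvilleKernel (c + d) x := by
  rcases le_or_gt x 0 with hx | hx
  · suffices h_zero : ∫⁻ y, riemannLiouvilleKernel c (x - y) * riemannLiouvilleKernel d y = 0 from
      h_zero.trans_le zero_le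
    refine (lintegral_congr_ae ?_).trans lintegral_zero
    filter_upwards [Measure.ae_ne volume 0] with y hy
    rcases hy.lt_or_gt with hy | hy
    · rw [riemannLiouvilleKernel_of_neg hy, mul_zero]
    · rw [riemannLiouvilleKernel_of_neg (by linarith), zero_mul]
  · refine le_of_eq ?_
    calc ∫⁻ y, riemannLiouvilleKernel c (x - y) * riemannLiouvilleKernel d y
        = ∫⁻ z, ENNReal.ofReal x *
            (riemannLiouvilleKernel c (x - x * z) * riemannLiouvilleKernel d (x * z)) := by
          rw [lintegral_eq_ofReal_mul_lintegral_comp_mul_left hx,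
            lintegral_const_mul' _ _ ENNReal.ofReal_ne_top]
      _ = ∫⁻ z, riemannLiouvilleKernel (c + d) x * betaPDF d c z := by
          refine lintegral_congr_ae ?_
          filter_upwards [Measure.ae_ne volume 0, Measure.ae_ne volume 1] with z hz0 hz1
          exact riemannLiouvilleKernel_mul_eq_betaPDF hc hd hx hz0 hz1
      _ = riemannLiouvilleKernel (c + d) x := by
          rw [lintegral_const_mul _ (by unfold betaPDF; fun_prop),
            lintegral_betaPDF_eq_one hd hc, mul_one]

end RiemannLiouvilleKernel

section MittagLefflerSeries

/-- The Neumann series `∑ γ^k x₊^(μk) / Γ(μk+1)` of the integral operator with kernel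
`γ • riemannLiouvilleKernel μ`, applied to the constant `1`. -/
noncomputable def mittagLefflerSeries (μ : ℝ) (γ : ℝ≥0) (x : ℝ) : ℝ≥0∞ :=
  ∑' k : ℕ, (γ : ℝ≥0∞) ^ k * riemannLiouvilleKernel (μ * k + 1) x

variable {μ : ℝ}

@[fun_prop]
lemma measurable_mittagLefflerSeries (μ : ℝ) (γ : ℝ≥0) : Measurable (mittagLefflerSeries μ γ) :=
  Measurable.tsum fun _ ↦ by fun_prop

lemma mittagLefflerSeries_eq_ofReal_mittagLeffler (hμ : 0 < μ) (γ : ℝ≥0) {x : ℝ} (hx : 0 ≤ x) :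
    mittagLefflerSeries μ γ x = ENNReal.ofReal (mittagLeffler μ (γ * x ^ μ)) := by
  have h_term (k : ℕ) : (γ : ℝ≥0∞) ^ k * riemannLiouvilleKernel (μ * k + 1) x =
      ENNReal.ofReal ((γ * x ^ μ) ^ k / Gamma (μ * k + 1)) := by
    rw [riemannLiouvilleKernel_of_nonneg hx, ← ENNReal.ofReal_coe_nnreal,
      ← ENNReal.ofReal_pow (by positivity), ← ENNReal.ofReal_mul (by positivity),
      add_sub_cancel_right, rpow_mul hx, rpow_natCast, mul_pow, mul_div_assoc]
  rw [mittagLeffler, mittagLefflerSeries, ENNReal.ofReal_tsum_of_nonneg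
    (fun k ↦ by positivity) (summable_mittagLeffler hμ _)]
  simp_rw [h_term]

lemma riemannLiouvilleKernel_one_add_lintegral_le (hμ : 0 < μ) (γ : ℝ≥0) (x : ℝ) :
    riemannLiouvilleKernel 1 x +
        γ * ∫⁻ y, riemannLiouvilleKernel μ (x - y) * mittagLefflerSeries μ γ y ≤
      mittagLefflerSeries μ γ x := by
  have h_term (k : ℕ) :
      ∫⁻ y, riemannLiouvilleKernel μ (x - y) *
          ((γ : ℝ≥0∞) ^ k * riemannLiouvilleKernel (μ * k + 1) y) ≤
        (γ : ℝ≥0∞) ^ k * riemannLiouvilleKernel (μ * (k + 1 : ℕ) + 1) x := by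
    have h_index : μ * (k + 1 : ℕ) + 1 = μ + (μ * k + 1) := by push_cast; ring
    simp_rw [mul_left_comm (riemannLiouvilleKernel μ _)]
    rw [lintegral_const_mul _ (by fun_prop), h_index]
    gcongr
    exact lintegral_riemannLiouvilleKernel_sub_mul_le hμ (by positivity) x
  calc riemannLiouvilleKernel 1 x +
        γ * ∫⁻ y, riemannLiouvilleKernel μ (x - y) * mittagLefflerSeries μ γ y
      = riemannLiouvilleKernel 1 x + γ * ∑' k : ℕ, ∫⁻ y,
          riemannLiouvilleKernel μ (x - y) *
            ((γ : ℝ≥0∞) ^ k * riemannLiouvilleKernel (μ * k + 1) y) := by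
        simp_rw [mittagLefflerSeries, ← ENNReal.tsum_mul_left (a := riemannLiouvilleKernel μ _)]
        rw [lintegral_tsum fun k ↦ by fun_prop]
    _ ≤ riemannLiouvilleKernel 1 x + γ * ∑' k : ℕ,
          (γ : ℝ≥0∞) ^ k * riemannLiouvilleKernel (μ * (k + 1 : ℕ) + 1) x := by
        gcongr with k
        exact h_term k
    _ = mittagLefflerSeries μ γ x := by
        rw [mittagLefflerSeries, ← ENNReal.tsum_mul_left,
          tsum_eq_zero_add' (f := fun k : ℕ ↦ _ * riemannLiouvilleKernel (μ * k + 1) x)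
            ENNReal.summable]
        simp [pow_succ', mul_assoc]

end MittagLefflerSeries

section SchurTest

variable {α : Type*} [MeasurableSpace α] {ν : Measure α} [SFinite ν] {K : α → α → ℝ≥0∞}
  {w : α → ℝ≥0∞} {θ : ℝ≥0∞}

lemma ae_eq_zero_of_le_lintegral_mul {d : α → ℝ≥0∞}
    (hK : AEMeasurable (Function.uncurry K) (ν.prod ν)) (hw : AEMeasurable w ν)
    (hw_ne : ∀ᵐ x ∂ν, w x ≠ 0) (hθ : θ < 1)
    (hKw : ∀ᵐ y ∂ν, ∫⁻ x, w x * K x y ∂ν ≤ θ * w y) (hd : AEMeasurable d ν)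
    (h_fin : ∫⁻ x, w x * d x ∂ν ≠ ∞) (h_le : ∀ᵐ x ∂ν, d x ≤ ∫⁻ y, K x y * d y ∂ν) :
    d =ᵐ[ν] 0 := by
  have h_ne_top : ∀ᵐ y ∂ν, d y ≠ ∞ := by
    filter_upwards [hw_ne, ae_lt_top' (hw.mul hd) h_fin] with y hwy hlt hdy
    simp [hdy, hwy] at hlt
  have h_contract : ∫⁻ x, w x * d x ∂ν ≤ θ * ∫⁻ x, w x * d x ∂ν :=
    calc ∫⁻ x, w x * d x ∂ν ≤ ∫⁻ x, ∫⁻ y, w x * K x y * d y ∂ν ∂ν := by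
          refine lintegral_mono_ae ?_
          filter_upwards [h_le] with x hx
          simp_rw [mul_assoc]
          exact (mul_le_mul_right hx _).trans (lintegral_const_mul_le _ _)
      _ = ∫⁻ y, ∫⁻ x, w x * K x y * d y ∂ν ∂ν :=
          lintegral_lintegral_swap ((hw.comp_fst.mul hK).mul hd.comp_snd)
      _ ≤ ∫⁻ y, θ * (w y * d y) ∂ν := by
          refine lintegral_mono_ae ?_
          filter_upwards [hKw, h_ne_top] with y hy hdy
          rw [lintegral_mul_const' _ _ hdy, ← mul_assoc]
          gcongr
      _ = θ * ∫⁻ x, w x * d x ∂ν := lintegral_const_mul' _ _ hθ.ne_top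
  have h_zero : ∫⁻ x, w x * d x ∂ν = 0 := by
    by_contra h_ne
    exact h_contract.not_gt (by simpa using ENNReal.mul_lt_mul_left h_ne h_fin hθ)
  filter_upwards [hw_ne, (lintegral_eq_zero_iff' (hw.mul hd)).1 h_zero] with x hwx hx
  exact (mul_eq_zero.1 hx).resolve_left hwx

lemma ae_le_of_le_add_lintegral_mul {f W F : α → ℝ≥0∞}
    (hK : AEMeasurable (Function.uncurry K) (ν.prod ν)) (hw : AEMeasurable w ν)
    (hw_ne : ∀ᵐ x ∂ν, w x ≠ 0) (hθ : θ < 1)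
    (hKw : ∀ᵐ y ∂ν, ∫⁻ x, w x * K x y ∂ν ≤ θ * w y) (hW : AEMeasurable W ν)
    (hF : AEMeasurable F ν) (h_fin : ∫⁻ x, w x * W x ∂ν ≠ ∞)
    (h_sub : ∀ᵐ x ∂ν, W x ≤ f x + ∫⁻ y, K x y * W y ∂ν)
    (h_super : ∀ᵐ x ∂ν, f x + ∫⁻ y, K x y * F y ∂ν ≤ F x) :
    W ≤ᵐ[ν] F := by
  have h_zero : (fun x ↦ W x - F x) =ᵐ[ν] 0 := by
    refine ae_eq_zero_of_le_lintegral_mul hK hw hw_ne hθ hKw (hW.sub hF)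
      (ne_top_of_le_ne_top h_fin (lintegral_mono fun x ↦ mul_le_mul_right tsub_le_self _)) ?_
    filter_upwards [h_sub, h_super, hK.aestronglyMeasurable.prodMk_left] with x hWx hFx hKx
    rw [tsub_le_iff_right]
    calc W x ≤ f x + ∫⁻ y, K x y * W y ∂ν := hWx
      _ ≤ f x + ∫⁻ y, (K x y * (W y - F y) + K x y * F y) ∂ν := by
          gcongr with y
          rw [← mul_add]
          gcongr
          exact le_tsub_add
      _ = ∫⁻ y, K x y * (W y - F y) ∂ν + (f x + ∫⁻ y, K x y * F y ∂ν) := by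
          have hKF : AEMeasurable (fun y ↦ K x y * F y) ν := hKx.aemeasurable.mul hF
          rw [lintegral_add_right' _ hKF, add_left_comm]
      _ ≤ ∫⁻ y, K x y * (W y - F y) ∂ν + F x := by gcongr
  filter_upwards [h_zero] with x hx
  exact tsub_eq_zero_iff_le.1 hx

end SchurTest

section AbelGronwall

variable {α : Type*} [MeasurableSpace α] {ν : Measure α} {φ : α → ℝ} {μ : ℝ}

lemma lintegral_comp_le_of_map_le_volume (hφ : AEMeasurable φ ν) (h_map : ν.map φ ≤ volume)
    {f : ℝ → ℝ≥0∞} (hf : Measurable f) : ∫⁻ x, f (φ x) ∂ν ≤ ∫⁻ z, f z := by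
  rw [← lintegral_map' hf.aemeasurable hφ]
  exact lintegral_mono' h_map le_rfl

lemma lintegral_exp_neg_mul_riemannLiouvilleKernel_sub_le (hμ : 0 < μ) {l : ℝ} (hl : 0 < l)
    (hφ : AEMeasurable φ ν) (h_map : ν.map φ ≤ volume) (r : ℝ) :
    ∫⁻ x, ENNReal.ofReal (exp (-(l * φ x))) * riemannLiouvilleKernel μ (φ x - r) ∂ν ≤
      ENNReal.ofReal (l ^ μ)⁻¹ * ENNReal.ofReal (exp (-(l * r))) := by
  have h_exp (z : ℝ) : ENNReal.ofReal (exp (-(l * z))) =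
      ENNReal.ofReal (exp (-(l * (z - r)))) * ENNReal.ofReal (exp (-(l * r))) := by
    rw [← ENNReal.ofReal_mul (exp_nonneg _), ← exp_add]
    ring_nf
  calc ∫⁻ x, ENNReal.ofReal (exp (-(l * φ x))) * riemannLiouvilleKernel μ (φ x - r) ∂ν
      ≤ ∫⁻ z, ENNReal.ofReal (exp (-(l * z))) * riemannLiouvilleKernel μ (z - r) :=
        lintegral_comp_le_of_map_le_volume (f := fun z ↦ ENNReal.ofReal (exp (-(l * z))) *
          riemannLiouvilleKernel μ (z - r)) hφ h_map (by fun_prop)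
    _ = ∫⁻ z, ENNReal.ofReal (exp (-(l * (z - r)))) * riemannLiouvilleKernel μ (z - r) *
          ENNReal.ofReal (exp (-(l * r))) := by
        refine lintegral_congr fun z ↦ ?_
        rw [h_exp z, mul_right_comm]
    _ = ENNReal.ofReal (l ^ μ)⁻¹ * ENNReal.ofReal (exp (-(l * r))) := by
        rw [lintegral_mul_const' _ _ ENNReal.ofReal_ne_top,
          lintegral_sub_right_eq_self
            (fun z ↦ ENNReal.ofReal (exp (-(l * z))) * riemannLiouvilleKernel μ z) r,
          lintegral_exp_neg_mul_riemannLiouvilleKernel hμ hl]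

lemma add_lintegral_riemannLiouvilleKernel_mul_mittagLefflerSeries_le (hμ : 0 < μ)
    (hφ : AEMeasurable φ ν) (h_map : ν.map φ ≤ volume) (γ V : ℝ≥0) {p r : ℝ} (hr : p ≤ r) :
    V + γ * ∫⁻ y, riemannLiouvilleKernel μ (r - φ y) * (V * mittagLefflerSeries μ γ (φ y - p)) ∂ν ≤
      V * mittagLefflerSeries μ γ (r - p) := by
  have h_subst :
      ∫⁻ y, riemannLiouvilleKernel μ (r - φ y) * mittagLefflerSeries μ γ (φ y - p) ∂ν ≤
        ∫⁻ z, riemannLiouvilleKernel μ (r - p - z) * mittagLefflerSeries μ γ z := by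
    rw [← lintegral_sub_right_eq_self _ p]
    simp_rw [sub_sub_sub_cancel_right]
    exact lintegral_comp_le_of_map_le_volume (f := fun z ↦ riemannLiouvilleKernel μ (r - z) *
      mittagLefflerSeries μ γ (z - p)) hφ h_map (by fun_prop)
  simp_rw [mul_left_comm (riemannLiouvilleKernel μ _)]
  rw [lintegral_const_mul' _ _ ENNReal.coe_ne_top, mul_left_comm, ← mul_one_add]
  gcongr
  refine le_trans ?_ (riemannLiouvilleKernel_one_add_lintegral_le hμ γ (r - p))
  rw [riemannLiouvilleKernel_one_of_nonneg (sub_nonneg.2 hr)]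
  gcongr

lemma exists_pos_mul_ofReal_inv_rpow_lt_one (hμ : 0 < μ) (γ : ℝ≥0) :
    ∃ l : ℝ, 0 < l ∧ γ * ENNReal.ofReal (l ^ μ)⁻¹ < 1 := by
  refine ⟨(γ + 1) ^ μ⁻¹, by positivity, ?_⟩
  rw [rpow_inv_rpow (by positivity) hμ.ne', ← ENNReal.ofReal_coe_nnreal,
    ← ENNReal.ofReal_mul γ.coe_nonneg, ENNReal.ofReal_lt_one, ← div_eq_mul_inv,
    div_lt_one (by positivity)]
  exact lt_add_one _

/-- For large `l` the weight `exp (-l * φ)` makes the integral operator a contraction of `L¹(ν)`. -/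
lemma ae_le_mittagLefflerSeries_of_le_add_lintegral [SFinite ν] (hμ : 0 < μ)
    (hφ : AEMeasurable φ ν) (h_map : ν.map φ ≤ volume) {p : ℝ} (hp : ∀ᵐ x ∂ν, p ≤ φ x)
    (γ V : ℝ≥0) {W : α → ℝ≥0∞} (hW : AEMeasurable W ν) (h_fin : ∫⁻ x, W x ∂ν ≠ ∞)
    (h : ∀ᵐ x ∂ν, W x ≤ V + γ * ∫⁻ y, riemannLiouvilleKernel μ (φ x - φ y) * W y ∂ν) :
    ∀ᵐ x ∂ν, W x ≤ V * mittagLefflerSeries μ γ (φ x - p) := by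
  obtain ⟨l, hl, h_lt⟩ := exists_pos_mul_ofReal_inv_rpow_lt_one hμ γ
  have h_weight : ∀ᵐ x ∂ν, ENNReal.ofReal (exp (-(l * φ x))) ≤ ENNReal.ofReal (exp (-(l * p))) := by
    filter_upwards [hp] with x hx
    gcongr
  refine ae_le_of_le_add_lintegral_mul (f := fun _ ↦ V) (θ := γ * ENNReal.ofReal (l ^ μ)⁻¹)
    (K := fun x y ↦ γ * riemannLiouvilleKernel μ (φ x - φ y))
    (w := fun x ↦ ENNReal.ofReal (exp (-(l * φ x)))) ?_ (by fun_prop) ?_ h_lt ?_ hW ?_ ?_ ?_ ?_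
  · exact ((measurable_riemannLiouvilleKernel μ).comp_aemeasurable
      (hφ.comp_fst.sub hφ.comp_snd)).const_mul _
  · exact .of_forall fun x ↦ by simp [exp_pos]
  · refine .of_forall fun y ↦ ?_
    simp_rw [mul_left_comm _ (γ : ℝ≥0∞)]
    rw [lintegral_const_mul' _ _ ENNReal.coe_ne_top, mul_assoc]
    gcongr
    exact lintegral_exp_neg_mul_riemannLiouvilleKernel_sub_le hμ hl hφ h_map _
  · fun_prop
  · refine ne_top_of_le_ne_top (ENNReal.mul_ne_top
      (ENNReal.ofReal_ne_top (r := exp (-(l * p)))) h_fin) ?_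
    rw [← lintegral_const_mul' _ _ ENNReal.ofReal_ne_top]
    refine lintegral_mono_ae ?_
    filter_upwards [h_weight] with x hx
    gcongr
  · simpa only [mul_assoc, lintegral_const_mul' _ _ ENNReal.coe_ne_top] using h
  · filter_upwards [hp] with x hx
    simpa only [mul_assoc, lintegral_const_mul' _ _ ENNReal.coe_ne_top] using
      add_lintegral_riemannLiouvilleKernel_mul_mittagLefflerSeries_le hμ hφ h_map γ V hx

lemma le_mittagLefflerSeries_of_le_add_lintegral [SFinite ν] (hμ : 0 < μ)
    (hφ : AEMeasurable φ ν) (h_map : ν.map φ ≤ volume) {p : ℝ} (hp : ∀ᵐ x ∂ν, p ≤ φ x)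
    (γ V : ℝ≥0) {W : α → ℝ≥0∞} (hW : AEMeasurable W ν) (h_fin : ∫⁻ x, W x ∂ν ≠ ∞)
    (h : ∀ᵐ x ∂ν, W x ≤ V + γ * ∫⁻ y, riemannLiouvilleKernel μ (φ x - φ y) * W y ∂ν)
    {r : ℝ} (hr : p ≤ r) :
    V + γ * ∫⁻ y, riemannLiouvilleKernel μ (r - φ y) * W y ∂ν ≤
      V * mittagLefflerSeries μ γ (r - p) := by
  refine le_trans ?_
    (add_lintegral_riemannLiouvilleKernel_mul_mittagLefflerSeries_le hμ hφ h_map γ V hr)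
  gcongr 2
  refine lintegral_mono_ae ?_
  filter_upwards [ae_le_mittagLefflerSeries_of_le_add_lintegral hμ hφ h_map hp γ V hW h_fin h]
    with y hy
  gcongr

end AbelGronwall

lemma ofReal_integral_le_lintegral_ofReal {α : Type*} [MeasurableSpace α] {ν : Measure α}
    (f : α → ℝ) : ENNReal.ofReal (∫ x, f x ∂ν) ≤ ∫⁻ x, ENNReal.ofReal (f x) ∂ν := by
  by_cases hf : Integrable f ν
  · refine ENNReal.ofReal_le_of_le_toReal ?_
    rw [integral_eq_lintegral_pos_part_sub_lintegral_neg_part hf]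
    exact sub_le_self _ ENNReal.toReal_nonneg
  · simp [integral_undef hf]

section DerivMeasure

/-- The measure `dΨ = Ψ' dx` on the set `s`, along which the Riemann-Liouville integral with respect
to `Ψ` is taken. The density is truncated to `0` where `Ψ' < 0`. -/
noncomputable def derivMeasure (Ψ : ℝ → ℝ) (s : Set ℝ) : Measure ℝ :=
  (volume.restrict s).withDensity fun x ↦ ENNReal.ofReal (deriv Ψ x)

variable {Ψ u : ℝ → ℝ} {s : Set ℝ}

instance sFinite_derivMeasure (Ψ : ℝ → ℝ) (s : Set ℝ) : SFinite (derivMeasure Ψ s) := by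
  unfold derivMeasure
  infer_instance

lemma derivMeasure_absolutelyContinuous (Ψ : ℝ → ℝ) (s : Set ℝ) :
    derivMeasure Ψ s ≪ volume.restrict s :=
  withDensity_absolutelyContinuous _ _

lemma lintegral_derivMeasure (Ψ : ℝ → ℝ) (s : Set ℝ) (f : ℝ → ℝ≥0∞) :
    ∫⁻ x, f x ∂derivMeasure Ψ s = ∫⁻ x in s, ENNReal.ofReal (deriv Ψ x) * f x :=
  lintegral_withDensity_eq_lintegral_mul_non_measurable _ (by fun_prop)
    (.of_forall fun _ ↦ ENNReal.ofReal_lt_top) f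

lemma map_derivMeasure_le_volume (hs : MeasurableSet s) (hΨ : ∀ x ∈ s, DifferentiableAt ℝ Ψ x)
    (hΨ' : ∀ x ∈ s, 0 ≤ deriv Ψ x) (h_inj : InjOn Ψ s) :
    (derivMeasure Ψ s).map Ψ ≤ volume := by
  have h_map := map_withDensity_abs_det_fderiv_eq_addHaar volume hs.nullMeasurableSet
    (fun x hx ↦ (hΨ x hx).hasDerivAt.hasFDerivAt.hasFDerivWithinAt) h_inj
  have h_density : derivMeasure Ψ s = (volume.restrict s).withDensity fun x ↦
      ENNReal.ofReal |(ContinuousLinearMap.toSpanSingleton ℝ (deriv Ψ x)).det| := by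
    refine withDensity_congr_ae ?_
    filter_upwards [ae_restrict_mem hs] with x hx
    simp [abs_of_nonneg (hΨ' x hx)]
  rw [h_density, h_map]
  exact Measure.restrict_le_self

lemma integrable_derivMeasure_iff (hs : MeasurableSet s) (hΨ' : ∀ x ∈ s, 0 ≤ deriv Ψ x) :
    Integrable u (derivMeasure Ψ s) ↔ IntegrableOn (fun x ↦ deriv Ψ x * u x) s := by
  rw [derivMeasure, integrable_withDensity_iff_integrable_smul' (by fun_prop)
    (.of_forall fun _ ↦ ENNReal.ofReal_lt_top)]
  refine integrable_congr ?_
  filter_upwards [ae_restrict_mem hs] with x hx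
  simp [ENNReal.toReal_ofReal (hΨ' x hx)]

end DerivMeasure

section PsiGronwall

variable {Ψ u v g : ℝ → ℝ} {a b μ : ℝ}

lemma deriv_nonneg_of_monotoneOn_Icc (hΨ : MonotoneOn Ψ (Icc a b)) {x : ℝ} (hx : x ∈ Ioo a b) :
    0 ≤ deriv Ψ x := by
  rw [← derivWithin_of_mem_nhds (Icc_mem_nhds hx.1 hx.2)]
  exact hΨ.derivWithin_nonneg

lemma integrableOn_Ioo_deriv_mul_of_contDiffOn (hab : a < b) (hΨ : ContDiffOn ℝ 1 Ψ (Icc a b))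
    (hu : IntegrableOn u (Icc a b)) : IntegrableOn (fun s ↦ deriv Ψ s * u s) (Ioo a b) := by
  have h_int : IntegrableOn (fun s ↦ derivWithin Ψ (Icc a b) s * u s) (Icc a b) :=
    hu.continuousOn_mul (hΨ.continuousOn_derivWithin (uniqueDiffOn_Icc hab) le_rfl) isCompact_Icc
  refine (h_int.mono_set Ioo_subset_Icc_self).congr_fun (fun s hs ↦ ?_) measurableSet_Ioo
  simp only [derivWithin_of_mem_nhds (Icc_mem_nhds hs.1 hs.2)]

lemma ofReal_integral_le_lintegral_derivMeasure (hμ : 0 < μ) (hΨ : StrictMonoOn Ψ (Icc a b))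
    {t : ℝ} (ht : t ∈ Icc a b) :
    ENNReal.ofReal (∫ s in a..t, deriv Ψ s * (Ψ t - Ψ s) ^ (μ - 1) * u s) ≤
      ENNReal.ofReal (Gamma μ) * ∫⁻ s, riemannLiouvilleKernel μ (Ψ t - Ψ s) *
        ENNReal.ofReal (u s) ∂derivMeasure Ψ (Ioo a b) := by
  have hΓ := Gamma_pos_of_pos hμ
  have h_integrand (s : ℝ) (hs : s ∈ Ioo a t) :
      ENNReal.ofReal (deriv Ψ s * (Ψ t - Ψ s) ^ (μ - 1) * u s) =
        ENNReal.ofReal (Gamma μ) * (ENNReal.ofReal (deriv Ψ s) *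
          (riemannLiouvilleKernel μ (Ψ t - Ψ s) * ENNReal.ofReal (u s))) := by
    have hs_mem : s ∈ Ioo a b := ⟨hs.1, hs.2.trans_le ht.2⟩
    have h_deriv := deriv_nonneg_of_monotoneOn_Icc hΨ.monotoneOn hs_mem
    have h_sub : 0 ≤ Ψ t - Ψ s :=
      sub_nonneg.2 (hΨ.monotoneOn (Ioo_subset_Icc_self hs_mem) ht hs.2.le)
    rw [riemannLiouvilleKernel_of_nonneg h_sub, ← ENNReal.ofReal_mul (by positivity),
      ← ENNReal.ofReal_mul h_deriv, ← ENNReal.ofReal_mul hΓ.le]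
    congr 1
    field_simp
  rw [intervalIntegral.integral_of_le ht.1, integral_Ioc_eq_integral_Ioo, lintegral_derivMeasure,
    ← lintegral_const_mul' _ _ ENNReal.ofReal_ne_top]
  calc ENNReal.ofReal (∫ s in Ioo a t, deriv Ψ s * (Ψ t - Ψ s) ^ (μ - 1) * u s)
      ≤ ∫⁻ s in Ioo a t, ENNReal.ofReal (deriv Ψ s * (Ψ t - Ψ s) ^ (μ - 1) * u s) :=
        ofReal_integral_le_lintegral_ofReal _
    _ = ∫⁻ s in Ioo a t, ENNReal.ofReal (Gamma μ) * (ENNReal.ofReal (deriv Ψ s) *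
          (riemannLiouvilleKernel μ (Ψ t - Ψ s) * ENNReal.ofReal (u s))) :=
        setLIntegral_congr_fun measurableSet_Ioo h_integrand
    _ ≤ ∫⁻ s in Ioo a b, ENNReal.ofReal (Gamma μ) * (ENNReal.ofReal (deriv Ψ s) *
          (riemannLiouvilleKernel μ (Ψ t - Ψ s) * ENNReal.ofReal (u s))) :=
        lintegral_mono_set (Ioo_subset_Ioo_right ht.2)

lemma ofReal_le_add_lintegral_derivMeasure (hμ : 0 < μ) (hΨ_mono : StrictMonoOn Ψ (Icc a b))
    (hg_nonneg : ∀ t ∈ Icc a b, 0 ≤ g t) (hg_mono : MonotoneOn g (Icc a b))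
    (hv_mono : MonotoneOn v (Icc a b)) {t : ℝ} (ht : t ∈ Icc a b)
    (h : u t ≤ v t + g t * ∫ s in a..t, deriv Ψ s * (Ψ t - Ψ s) ^ (μ - 1) * u s) :
    ENNReal.ofReal (u t) ≤ (v b).toNNReal + (g b * Gamma μ).toNNReal *
      ∫⁻ s, riemannLiouvilleKernel μ (Ψ t - Ψ s) * ENNReal.ofReal (u s)
        ∂derivMeasure Ψ (Ioo a b) := by
  have hb : b ∈ Icc a b := right_mem_Icc.2 (ht.1.trans ht.2)
  set I : ℝ := ∫ s in a..t, deriv Ψ s * (Ψ t - Ψ s) ^ (μ - 1) * u s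
  set J : ℝ≥0∞ := ∫⁻ s, riemannLiouvilleKernel μ (Ψ t - Ψ s) * ENNReal.ofReal (u s)
    ∂derivMeasure Ψ (Ioo a b)
  calc ENNReal.ofReal (u t)
      ≤ ENNReal.ofReal (v t) + ENNReal.ofReal (g t) * ENNReal.ofReal I := by
        rw [← ENNReal.ofReal_mul (hg_nonneg t ht)]
        exact (ENNReal.ofReal_le_ofReal h).trans ENNReal.ofReal_add_le
    _ ≤ ENNReal.ofReal (v b) + ENNReal.ofReal (g b) * (ENNReal.ofReal (Gamma μ) * J) := by
        gcongr
        · exact hv_mono ht hb ht.2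
        · exact hg_mono ht hb ht.2
        · exact ofReal_integral_le_lintegral_derivMeasure hμ hΨ_mono ht
    _ = (v b).toNNReal + (g b * Gamma μ).toNNReal * J := by
        rw [← mul_assoc, ← ENNReal.ofReal_mul (hg_nonneg b hb)]
        rfl

lemma le_mul_mittagLeffler_right_endpoint (hab : a ≤ b) (hΨ : DifferentiableOn ℝ Ψ (Ioo a b))
    (hΨ_mono : StrictMonoOn Ψ (Icc a b)) (hμ : 0 < μ)
    (hu_int : IntegrableOn (fun s ↦ deriv Ψ s * u s) (Ioo a b)) (hv_nonneg : 0 ≤ v b)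
    (hg_nonneg : ∀ t ∈ Icc a b, 0 ≤ g t) (hg_mono : MonotoneOn g (Icc a b))
    (hv_mono : MonotoneOn v (Icc a b))
    (hineq : ∀ t ∈ Icc a b,
      u t ≤ v t + g t * ∫ s in a..t, deriv Ψ s * (Ψ t - Ψ s) ^ (μ - 1) * u s) :
    u b ≤ v b * mittagLeffler μ (g b * Gamma μ * (Ψ b - Ψ a) ^ μ) := by
  have ha : a ∈ Icc a b := left_mem_Icc.2 hab
  have hb : b ∈ Icc a b := right_mem_Icc.2 hab
  have hΨ_le (s : ℝ) (hs : s ∈ Icc a b) : Ψ a ≤ Ψ s := hΨ_mono.monotoneOn ha hs hs.1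
  have h_coeff : 0 ≤ g b * Gamma μ := mul_nonneg (hg_nonneg b hb) (Gamma_pos_of_pos hμ).le
  have h_sub : 0 ≤ Ψ b - Ψ a := sub_nonneg.2 (hΨ_le b hb)
  have h_deriv (s : ℝ) (hs : s ∈ Ioo a b) : 0 ≤ deriv Ψ s :=
    deriv_nonneg_of_monotoneOn_Icc hΨ_mono.monotoneOn hs
  set ν := derivMeasure Ψ (Ioo a b)
  have hν : ν ≪ volume.restrict (Ioo a b) := derivMeasure_absolutelyContinuous _ _
  have h_mem : ∀ᵐ s ∂ν, s ∈ Icc a b :=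
    hν.ae_le ((ae_restrict_mem measurableSet_Ioo).mono Ioo_subset_Icc_self)
  have hΨ_meas : AEMeasurable Ψ ν :=
    (hΨ.continuousOn.aemeasurable measurableSet_Ioo).mono_ac hν
  have h_map : ν.map Ψ ≤ volume :=
    map_derivMeasure_le_volume measurableSet_Ioo
      (fun s hs ↦ hΨ.differentiableAt (Ioo_mem_nhds hs.1 hs.2)) h_deriv
      (hΨ_mono.injOn.mono Ioo_subset_Icc_self)
  have hu_ν : Integrable u ν := (integrable_derivMeasure_iff measurableSet_Ioo h_deriv).2 hu_int
  have h_abel (t : ℝ) (ht : t ∈ Icc a b) :=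
    ofReal_le_add_lintegral_derivMeasure hμ hΨ_mono hg_nonneg hg_mono hv_mono ht (hineq t ht)
  have h_le := (h_abel b hb).trans <|
    le_mittagLefflerSeries_of_le_add_lintegral hμ hΨ_meas h_map (h_mem.mono hΨ_le) _ _
      hu_ν.aemeasurable.ennreal_ofReal hu_ν.lintegral_lt_top.ne (h_mem.mono h_abel) (hΨ_le b hb)
  rwa [mittagLefflerSeries_eq_ofReal_mittagLeffler hμ _ h_sub, Real.coe_toNNReal _ h_coeff,
    ← ENNReal.ofReal, ← ENNReal.ofReal_mul hv_nonneg, ENNReal.ofReal_le_ofReal_iff] at h_le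
  exact mul_nonneg hv_nonneg (mittagLeffler_nonneg hμ (by positivity))

theorem psi_gronwall_mittagLeffler_general (hΨ : DifferentiableOn ℝ Ψ (Ioo a b))
    (hΨ_mono : StrictMonoOn Ψ (Icc a b)) (hμ : 0 < μ)
    (hu_int : IntegrableOn (fun s ↦ deriv Ψ s * u s) (Ioo a b))
    (hv_nonneg : ∀ t ∈ Icc a b, 0 ≤ v t) (hg_nonneg : ∀ t ∈ Icc a b, 0 ≤ g t)
    (hg_mono : MonotoneOn g (Icc a b)) (hv_mono : MonotoneOn v (Icc a b))
    (hineq : ∀ t ∈ Icc a b,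
      u t ≤ v t + g t * ∫ s in a..t, deriv Ψ s * (Ψ t - Ψ s) ^ (μ - 1) * u s) :
    ∀ t ∈ Icc a b, u t ≤ v t * mittagLeffler μ (g t * Gamma μ * (Ψ t - Ψ a) ^ μ) := by
  intro t ht
  have h_Icc : Icc a t ⊆ Icc a b := Icc_subset_Icc_right ht.2
  have h_Ioo : Ioo a t ⊆ Ioo a b := Ioo_subset_Ioo_right ht.2
  exact le_mul_mittagLeffler_right_endpoint ht.1 (hΨ.mono h_Ioo) (hΨ_mono.mono h_Icc) hμ
    (hu_int.mono_set h_Ioo) (hv_nonneg t ht) (fun s hs ↦ hg_nonneg s (h_Icc hs))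
    (hg_mono.mono h_Icc) (hv_mono.mono h_Icc) fun s hs ↦ hineq s (h_Icc hs)

end PsiGronwall

/-- Ψ-Gronwall lemma (Mittag-Leffler form): if moreover `v` is nondecreasing,
then `u(t) ≤ v(t) E_μ(g(t) Γ(μ) (Ψ(t)-Ψ(a))^μ)`. -/
theorem psi_gronwall_mittagLeffler (Ψ : ℝ → ℝ) (a b μ : ℝ) (u v g : ℝ → ℝ) (hab : a < b)
    (hΨC1 : ContDiffOn ℝ 1 Ψ (Icc a b)) (hΨmono : StrictMonoOn Ψ (Icc a b))
    (hΨ' : ∀ t ∈ Icc a b, deriv Ψ t ≠ 0) (hμ : 0 < μ)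
    (hu_int : IntegrableOn u (Icc a b)) (hv_int : IntegrableOn v (Icc a b))
    (hu_nonneg : ∀ t ∈ Icc a b, 0 ≤ u t) (hv_nonneg : ∀ t ∈ Icc a b, 0 ≤ v t)
    (hg_cont : ContinuousOn g (Icc a b)) (hg_nonneg : ∀ t ∈ Icc a b, 0 ≤ g t)
    (hg_mono : MonotoneOn g (Icc a b)) (hv_mono : MonotoneOn v (Icc a b))
    (hineq : ∀ t ∈ Icc a b,
      u t ≤ v t + g t * ∫ s in a..t, deriv Ψ s * (Ψ t - Ψ s) ^ (μ - 1) * u s) :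
    ∀ t ∈ Icc a b,
      u t ≤ v t * mittagLeffler μ (g t * Real.Gamma μ * (Ψ t - Ψ a) ^ μ) := by
  exact psi_gronwall_mittagLeffler_general
    ((hΨC1.differentiableOn one_ne_zero).mono Ioo_subset_Icc_self) hΨmono hμ
    (integrableOn_Ioo_deriv_mul_of_contDiffOn hab hΨC1 hu_int) hv_nonneg hg_nonneg hg_mono hv_mono
    hineq
end

section
/- Let Ψ : [a,b] → ℝ be C¹, increasing with Ψ' ≠ 0, 0 < μ ≤ 1, 0 ≤ η ≤ 1, ξ = μ + η(1-μ). If x ∈ C¹_{1-ξ,Ψ}([a,b],ℝ), then I^{μ,Ψ}_{a+} D^{μ,η,Ψ}_{a+} x(t) = x(t) - ((Ψ(t)-Ψ(a))^{ξ-1}/Γ(ξ)) · I^{(1-η)(1-μ),Ψ}_{a+} x(a) for all t ∈ (a,b]. -/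
open Set Real MeasureTheory Filter Topology

/-- Ψ-Riemann–Liouville fractional integral of order `α` (with the convention
`I^{0,Ψ}_{a+} = id`). -/
noncomputable def psiFracInt (Ψ : ℝ → ℝ) (a α : ℝ) (x : ℝ → ℝ) (t : ℝ) : ℝ :=
  if α = 0 then x t
  else (1 / Real.Gamma α) * ∫ s in a..t, deriv Ψ s * (Ψ t - Ψ s) ^ (α - 1) * x s

/-- Ψ-Hilfer fractional derivative of order `μ` and type `η`. -/
noncomputable def psiHilferDeriv (Ψ : ℝ → ℝ) (a μ η : ℝ) (x : ℝ → ℝ) (t : ℝ) : ℝ :=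
  psiFracInt Ψ a (η * (1 - μ))
    (fun r => (1 / deriv Ψ r) * deriv (psiFracInt Ψ a ((1 - η) * (1 - μ)) x) r) t

/-!
Let `p_β` be the power `(Ψ - Ψ a) ^ (β - 1) / Γ β`. The beta integral gives `I^α p_β = p_{α+β}`,
and Fubini's theorem on a triangle then gives `I^α I^β = I^{α+β}`. An absolutely continuous `x` is
`x a + I^1 g` with `g = x' / Ψ'`, hence `x = c p_ξ + I^ξ h`, where `c = x a` and `h = g` if
`ξ = 1`, while `c = 0` and `h = x a • p_{1-ξ} + I^{1-ξ} g` if `ξ < 1`. Therefore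
`I^{1-ξ} x = c + I^1 h`, so that `c` is the limit of `I^{1-ξ} x` at `a` and `h` is its derivative
with respect to `Ψ`. It follows that `D x = I^{ξ-μ} h` and `I^μ D x = I^ξ h = x - c p_ξ`. In the
weighted `C¹` class, `x'` is a continuous multiple of the integrable function
`(Ψ - Ψ a) ^ (ξ - 1)`, which makes `x` absolutely continuous.
-/

/-- Power function with base point `s`, normalised so that the fractional integral of order `α`
takes order `β` to order `α + β`. Its value at `β = 0` is `0`, because `Real.Gamma 0 = 0`. As a
function of `s`, `deriv Ψ s * psiPower Ψ s α t` is the kernel of the fractional integral of order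
`α` at `t`. -/
noncomputable def psiPower (Ψ : ℝ → ℝ) (s β t : ℝ) : ℝ :=
  (Ψ t - Ψ s) ^ (β - 1) / Real.Gamma β

/-- Convergence of the integral that defines `psiFracInt Ψ a α f t` for `α ≠ 0`. -/
def PsiFracIntegrable (Ψ : ℝ → ℝ) (a α : ℝ) (f : ℝ → ℝ) (t : ℝ) : Prop :=
  IntervalIntegrable (fun s => deriv Ψ s * psiPower Ψ s α t * f s) volume a t

/-- Continuity on `[a, b]` together with a positive derivative on `(a, b)`: the condition on the
scale function `Ψ` under which fractional integration with respect to `Ψ` is developed here. -/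
structure PsiAdmissible (Ψ : ℝ → ℝ) (a b : ℝ) : Prop where
  continuousOn : ContinuousOn Ψ (Icc a b)
  deriv_pos : ∀ r ∈ Ioo a b, 0 < deriv Ψ r

namespace PsiAdmissible

variable {Ψ : ℝ → ℝ} {a b s t : ℝ}

lemma mono (h : PsiAdmissible Ψ a b) (hs : a ≤ s) (ht : t ≤ b) : PsiAdmissible Ψ s t :=
  ⟨h.continuousOn.mono (Icc_subset_Icc hs ht),
    fun r hr => h.deriv_pos r (Ioo_subset_Ioo hs ht hr)⟩

lemma strictMonoOn (h : PsiAdmissible Ψ a b) : StrictMonoOn Ψ (Icc a b) :=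
  strictMonoOn_of_deriv_pos (convex_Icc a b) h.continuousOn fun r hr =>
    h.deriv_pos r (interior_Icc (a := a) ▸ hr)

lemma sub_pos (h : PsiAdmissible Ψ a b) (hab : a < b) : 0 < Ψ b - Ψ a :=
  _root_.sub_pos.2 <|
    h.strictMonoOn (left_mem_Icc.2 hab.le) (right_mem_Icc.2 hab.le) hab

lemma hasDerivAt (h : PsiAdmissible Ψ a b) {r : ℝ} (hr : r ∈ Ioo a b) :
    HasDerivAt Ψ (deriv Ψ r) r :=
  (differentiableAt_of_deriv_ne_zero (h.deriv_pos r hr).ne').hasDerivAt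

lemma psiPower_pos (h : PsiAdmissible Ψ a b) (hab : a < b) {α : ℝ} (hα : 0 < α) :
    0 < psiPower Ψ a α b :=
  div_pos (Real.rpow_pos_of_pos (h.sub_pos hab) _) (Real.Gamma_pos_of_pos hα)

lemma kernel_pos (h : PsiAdmissible Ψ a b) (hs : s ∈ Ioo a b) {α : ℝ} (hα : 0 < α) :
    0 < deriv Ψ s * psiPower Ψ s α b :=
  mul_pos (h.deriv_pos s hs) ((h.mono hs.1.le le_rfl).psiPower_pos hs.2 hα)

end PsiAdmissible

section Power

variable {Ψ : ℝ → ℝ} {a s t : ℝ} {α β : ℝ}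

lemma psiPower_one : psiPower Ψ s 1 t = 1 := by
  simp [psiPower]

lemma psiFracInt_zero (f : ℝ → ℝ) : psiFracInt Ψ a 0 f = f :=
  funext fun _ => if_pos rfl

lemma psiFracInt_eq_integral (hα : α ≠ 0) (f : ℝ → ℝ) :
    psiFracInt Ψ a α f t = ∫ s in a..t, deriv Ψ s * psiPower Ψ s α t * f s := by
  rw [psiFracInt, if_neg hα, ← intervalIntegral.integral_const_mul]
  congr 1 with s
  rw [psiPower]
  ring

lemma integral_rpow_mul_sub_rpow {L : ℝ} (hα : 0 < α) (hβ : 0 < β) (hL : 0 < L) :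
    ∫ u in 0..L, u ^ (α - 1) * (L - u) ^ (β - 1) =
      L ^ (α + β - 1) * (Real.Gamma α * Real.Gamma β / Real.Gamma (α + β)) := by
  rw [← Complex.ofReal_inj, ← intervalIntegral.integral_ofReal]
  calc ∫ u in 0..L, ((u ^ (α - 1) * (L - u) ^ (β - 1) : ℝ) : ℂ)
      = ∫ u in 0..L, (u : ℂ) ^ ((α : ℂ) - 1) * ((L : ℂ) - u) ^ ((β : ℂ) - 1) := by
        refine intervalIntegral.integral_congr fun u hu => ?_
        rw [uIcc_of_le hL.le] at hu
        simp only [Complex.ofReal_mul, Complex.ofReal_cpow hu.1,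
          Complex.ofReal_cpow (sub_nonneg.2 hu.2), Complex.ofReal_sub, Complex.ofReal_one]
    _ = (L : ℂ) ^ ((α : ℂ) + β - 1) * Complex.betaIntegral α β :=
        Complex.betaIntegral_scaled _ _ hL
    _ = _ := by
        rw [Complex.betaIntegral_eq_Gamma_mul_div _ _ (by simpa using hα) (by simpa using hβ)]
        simp only [Complex.ofReal_mul, Complex.ofReal_div, Complex.ofReal_cpow hL.le,
          Complex.ofReal_sub, Complex.ofReal_add, Complex.ofReal_one, ← Complex.Gamma_ofReal]

lemma PsiAdmissible.psiFracInt_psiPower (h : PsiAdmissible Ψ s t) (hst : s < t) (hα : 0 < α)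
    (hβ : 0 < β) : psiFracInt Ψ s α (psiPower Ψ s β) t = psiPower Ψ s (α + β) t := by
  have hsubst : ∫ r in s..t, deriv Ψ r • ((fun u => u ^ (β - 1) * (Ψ t - Ψ s - u) ^ (α - 1)) ∘
      fun r => Ψ r - Ψ s) r = ∫ u in (Ψ s - Ψ s)..(Ψ t - Ψ s),
        u ^ (β - 1) * (Ψ t - Ψ s - u) ^ (α - 1) := by
    refine intervalIntegral.integral_deriv_smul_comp_of_deriv_nonneg
      (f := fun r => Ψ r - Ψ s) ?_ (fun r hr => ?_) (fun r hr => ?_)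
    · rw [uIcc_of_le hst.le]
      exact h.continuousOn.sub continuousOn_const
    all_goals rw [min_eq_left hst.le, max_eq_right hst.le] at hr
    · exact (h.hasDerivAt hr).sub_const _
    · exact (h.deriv_pos r hr).le
  rw [sub_self, integral_rpow_mul_sub_rpow hβ hα (h.sub_pos hst)] at hsubst
  calc psiFracInt Ψ s α (psiPower Ψ s β) t
      = (Real.Gamma α * Real.Gamma β)⁻¹ * ∫ r in s..t, deriv Ψ r •
          ((fun u => u ^ (β - 1) * (Ψ t - Ψ s - u) ^ (α - 1)) ∘ fun r => Ψ r - Ψ s) r := by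
        rw [psiFracInt_eq_integral hα.ne', ← intervalIntegral.integral_const_mul]
        congr 1 with r
        simp only [psiPower, Function.comp_apply, sub_sub_sub_cancel_right, smul_eq_mul]
        ring
    _ = psiPower Ψ s (α + β) t := by
        have := (Real.Gamma_pos_of_pos hα).ne'
        have := (Real.Gamma_pos_of_pos hβ).ne'
        rw [hsubst, psiPower, add_comm β α]
        field_simp

lemma PsiAdmissible.psiFracIntegrable_psiPower (h : PsiAdmissible Ψ s t) (hst : s < t)
    (hα : 0 < α) (hβ : 0 < β) : PsiFracIntegrable Ψ s α (psiPower Ψ s β) t := by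
  -- If the integral diverged, its junk value `0` would contradict the positive value found above.
  by_contra hdiv
  have hval := h.psiFracInt_psiPower hst hα hβ
  rw [psiFracInt_eq_integral hα.ne', intervalIntegral.integral_undef hdiv] at hval
  exact (h.psiPower_pos hst (add_pos hα hβ)).ne hval

end Power

section Basic

variable {Ψ : ℝ → ℝ} {a t α β c : ℝ} {f g : ℝ → ℝ}

lemma psiFracIntegrable_one_iff :
    PsiFracIntegrable Ψ a 1 f t ↔ IntervalIntegrable (fun s => deriv Ψ s * f s) volume a t := by
  simp only [PsiFracIntegrable, psiPower_one, mul_one]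

lemma psiFracInt_one_eq_integral : psiFracInt Ψ a 1 f t = ∫ s in a..t, deriv Ψ s * f s := by
  simp only [psiFracInt_eq_integral one_ne_zero, psiPower_one, mul_one]

lemma psiFracInt_congr_ae (hα : α ≠ 0) (hfg : f =ᵐ[volume.restrict (uIoc a t)] g) :
    psiFracInt Ψ a α f t = psiFracInt Ψ a α g t := by
  rw [psiFracInt_eq_integral hα, psiFracInt_eq_integral hα]
  refine intervalIntegral.integral_congr_ae_restrict ?_
  filter_upwards [hfg] with s hs
  rw [hs]

lemma PsiFracIntegrable.congr_ae (hf : PsiFracIntegrable Ψ a α f t)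
    (hfg : f =ᵐ[volume.restrict (uIoc a t)] g) : PsiFracIntegrable Ψ a α g t := by
  refine IntervalIntegrable.congr_ae hf ?_
  filter_upwards [hfg] with s hs
  rw [hs]

lemma PsiFracIntegrable.const_mul_add (hf : PsiFracIntegrable Ψ a α f t)
    (hg : PsiFracIntegrable Ψ a α g t) : PsiFracIntegrable Ψ a α (fun s => c * f s + g s) t := by
  refine ((hf.const_mul c).add hg).congr fun s _ => ?_
  ring

lemma PsiFracIntegrable.psiFracInt_const_mul_add (hf : PsiFracIntegrable Ψ a α f t)
    (hg : PsiFracIntegrable Ψ a α g t) : psiFracInt Ψ a α (fun s => c * f s + g s) t =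
      c * psiFracInt Ψ a α f t + psiFracInt Ψ a α g t := by
  obtain rfl | hα := eq_or_ne α 0
  · simp only [psiFracInt_zero]
  · simp only [psiFracInt_eq_integral hα]
    rw [← intervalIntegral.integral_const_mul, ← intervalIntegral.integral_add (hf.const_mul c) hg]
    congr 1 with s
    ring

lemma PsiAdmissible.psiPower_add_eq_mul (h : PsiAdmissible Ψ a t) (hat : a < t) (hα : 0 < α) :
    psiPower Ψ a (α + β) t =
      Real.Gamma α / Real.Gamma (α + β) * (Ψ t - Ψ a) ^ β * psiPower Ψ a α t := by
  have := (Real.Gamma_pos_of_pos hα).ne'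
  rw [psiPower, psiPower, add_sub_right_comm, Real.rpow_add (h.sub_pos hat)]
  field_simp

lemma PsiFracIntegrable.add_order (hf : PsiFracIntegrable Ψ a α f t) (h : PsiAdmissible Ψ a t)
    (hat : a ≤ t) (hα : 0 < α) (hβ : 0 ≤ β) : PsiFracIntegrable Ψ a (α + β) f t := by
  have hcont : ContinuousOn (fun s => Real.Gamma α / Real.Gamma (α + β) * (Ψ t - Ψ s) ^ β)
      (uIcc a t) := by
    rw [uIcc_of_le hat]
    exact continuousOn_const.mul
      ((continuousOn_const.sub h.continuousOn).rpow_const fun _ _ => Or.inr hβ)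
  refine (IntervalIntegrable.continuousOn_mul hf hcont).congr_uIoo fun s hs => ?_
  rw [uIoo_of_le hat] at hs
  simp only [(h.mono hs.1.le le_rfl).psiPower_add_eq_mul hs.2 hα]
  ring

end Basic

section Measurability

variable {Ψ : ℝ → ℝ} {a t α : ℝ} {f : ℝ → ℝ}

lemma PsiAdmissible.aemeasurable (h : PsiAdmissible Ψ a t) :
    AEMeasurable Ψ (volume.restrict (Ioc a t)) :=
  (h.continuousOn.mono Ioc_subset_Icc_self).aemeasurable measurableSet_Ioc

lemma ae_restrict_Ioc_of_forall_Ioo {p : ℝ → Prop} (hp : ∀ s ∈ Ioo a t, p s) :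
    ∀ᵐ s ∂volume.restrict (Ioc a t), p s := by
  rw [← restrict_Ioo_eq_restrict_Ioc]
  exact ae_restrict_of_forall_mem measurableSet_Ioo hp

lemma PsiFracIntegrable.aemeasurable (hf : PsiFracIntegrable Ψ a α f t)
    (h : PsiAdmissible Ψ a t) (hα : 0 < α) : AEMeasurable f (volume.restrict (Ioc a t)) := by
  have hker : AEMeasurable (fun s => deriv Ψ s * psiPower Ψ s α t) (volume.restrict (Ioc a t)) :=
    (measurable_deriv Ψ).aemeasurable.mul
      (((h.aemeasurable.const_sub (Ψ t)).pow_const (α - 1)).div_const _)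
  refine (hf.1.aestronglyMeasurable.aemeasurable.div hker).congr
    (ae_restrict_Ioc_of_forall_Ioo fun s hs => ?_)
  exact mul_div_cancel_left₀ (f s) (h.kernel_pos hs hα).ne'

end Measurability

section Triangle

variable {E : Type*} [NormedAddCommGroup E] {F : ℝ → ℝ → E} {a t : ℝ}

lemma restrict_Ioc_restrict_Ioi {s : ℝ} (hs : a ≤ s) :
    (volume.restrict (Ioc a t)).restrict (Ioi s) = volume.restrict (Ioc s t) := by
  rw [Measure.restrict_restrict measurableSet_Ioi, inter_comm, Ioc_inter_Ioi, sup_eq_right.2 hs]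

lemma restrict_Ioc_restrict_Iio {r : ℝ} (hr : r ≤ t) :
    (volume.restrict (Ioc a t)).restrict (Iio r) = volume.restrict (Ioc a r) := by
  rw [Measure.restrict_restrict measurableSet_Iio, ← restrict_Ioo_eq_restrict_Ioc]
  congr 1 with s
  simp only [mem_inter_iff, mem_Iio, mem_Ioc, mem_Ioo]
  exact ⟨fun h => ⟨h.2.1, h.1⟩, fun h => ⟨h.2, h.1, (h.2.trans_le hr).le⟩⟩

section Integral

variable [NormedSpace ℝ E]

lemma integral_indicator_triangle_left {s : ℝ} (hs : s ∈ Ioc a t) :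
    ∫ r in Ioc a t, {z : ℝ × ℝ | z.2 < z.1}.indicator (Function.uncurry F) (r, s) =
      ∫ r in s..t, F r s := by
  rw [intervalIntegral.integral_of_le hs.2, ← restrict_Ioc_restrict_Ioi hs.1.le]
  exact integral_indicator (f := (F · s)) measurableSet_Ioi

lemma integral_indicator_triangle_right {r : ℝ} (hr : r ∈ Ioc a t) :
    ∫ s in Ioc a t, {z : ℝ × ℝ | z.2 < z.1}.indicator (Function.uncurry F) (r, s) =
      ∫ s in a..r, F r s := by
  rw [intervalIntegral.integral_of_le hr.1.le, ← restrict_Ioc_restrict_Iio hr.2]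
  exact integral_indicator (f := F r) measurableSet_Iio

end Integral

lemma integrable_indicator_triangle
    (hF : AEStronglyMeasurable (Function.uncurry F)
      ((volume.restrict (Ioc a t)).prod (volume.restrict (Ioc a t))))
    (hsec : ∀ s ∈ Ioo a t, IntervalIntegrable (F · s) volume s t)
    (hnorm : IntervalIntegrable (fun s => ∫ r in s..t, ‖F r s‖) volume a t) :
    Integrable ({z : ℝ × ℝ | z.2 < z.1}.indicator (Function.uncurry F))
      ((volume.restrict (Ioc a t)).prod (volume.restrict (Ioc a t))) := by
  refine (integrable_prod_iff' (hF.indicator (measurableSet_lt measurable_snd measurable_fst))).2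
    ⟨ae_restrict_Ioc_of_forall_Ioo fun s hs => ?_, hnorm.1.congr ?_⟩
  · refine (integrable_indicator_iff (f := (F · s)) measurableSet_Ioi).2 ?_
    rw [IntegrableOn, restrict_Ioc_restrict_Ioi hs.1.le]
    exact (hsec s hs).1
  · filter_upwards [ae_restrict_mem measurableSet_Ioc] with s hs
    simp only [norm_indicator_eq_indicator_norm]
    exact (integral_indicator_triangle_left (F := fun r s => ‖F r s‖) hs).symm

variable [NormedSpace ℝ E]

lemma intervalIntegrable_integral_triangle (hat : a ≤ t)
    (hF : Integrable ({z : ℝ × ℝ | z.2 < z.1}.indicator (Function.uncurry F))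
      ((volume.restrict (Ioc a t)).prod (volume.restrict (Ioc a t)))) :
    IntervalIntegrable (fun r => ∫ s in a..r, F r s) volume a t := by
  rw [intervalIntegrable_iff_integrableOn_Ioc_of_le hat]
  refine hF.integral_prod_left.congr ?_
  filter_upwards [ae_restrict_mem measurableSet_Ioc] with r hr
  exact integral_indicator_triangle_right hr

lemma integral_integral_swap_triangle (hat : a ≤ t)
    (hF : Integrable ({z : ℝ × ℝ | z.2 < z.1}.indicator (Function.uncurry F))
      ((volume.restrict (Ioc a t)).prod (volume.restrict (Ioc a t)))) :
    ∫ r in a..t, ∫ s in a..r, F r s = ∫ s in a..t, ∫ r in s..t, F r s := by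
  rw [intervalIntegral.integral_of_le hat, intervalIntegral.integral_of_le hat]
  calc _ = ∫ r in Ioc a t, ∫ s in Ioc a t,
        {z : ℝ × ℝ | z.2 < z.1}.indicator (Function.uncurry F) (r, s) :=
        (setIntegral_congr_fun measurableSet_Ioc fun _ => integral_indicator_triangle_right).symm
    _ = ∫ s in Ioc a t, ∫ r in Ioc a t,
        {z : ℝ × ℝ | z.2 < z.1}.indicator (Function.uncurry F) (r, s) :=
        integral_integral_swap hF
    _ = _ := setIntegral_congr_fun measurableSet_Ioc fun _ => integral_indicator_triangle_left

end Triangle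

section Semigroup

variable {Ψ : ℝ → ℝ} {a t α β : ℝ} {f : ℝ → ℝ}

/-- Kernel of the iterated integral `psiFracInt Ψ a α (psiFracInt Ψ a β f) t`, with `r` the outer
and `s` the inner variable. -/
noncomputable def psiIterKernel (Ψ : ℝ → ℝ) (α β t r s : ℝ) : ℝ :=
  deriv Ψ r * psiPower Ψ r α t * (deriv Ψ s * psiPower Ψ s β r)

namespace PsiAdmissible

lemma psiIterKernel_pos (h : PsiAdmissible Ψ a t) (hα : 0 < α) (hβ : 0 < β) {r s : ℝ}
    (hs : s ∈ Ioo a t) (hr : r ∈ Ioo s t) : 0 < psiIterKernel Ψ α β t r s :=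
  mul_pos ((h.mono hs.1.le le_rfl).kernel_pos hr hα)
    ((h.mono le_rfl hr.2.le).kernel_pos ⟨hs.1, hr.1⟩ hβ)

lemma intervalIntegrable_psiIterKernel {s : ℝ} (h : PsiAdmissible Ψ s t) (hst : s < t)
    (hα : 0 < α) (hβ : 0 < β) :
    IntervalIntegrable (fun r => psiIterKernel Ψ α β t r s) volume s t := by
  refine IntervalIntegrable.congr (fun r _ => ?_)
    ((h.psiFracIntegrable_psiPower hst hα hβ).mul_const (deriv Ψ s))
  simp only [psiIterKernel]
  ring

lemma integral_psiIterKernel {s : ℝ} (h : PsiAdmissible Ψ s t) (hst : s < t)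
    (hα : 0 < α) (hβ : 0 < β) :
    ∫ r in s..t, psiIterKernel Ψ α β t r s = deriv Ψ s * psiPower Ψ s (α + β) t := by
  rw [← h.psiFracInt_psiPower hst hα hβ, psiFracInt_eq_integral hα.ne',
    ← intervalIntegral.integral_const_mul]
  congr 1 with r
  rw [psiIterKernel]
  ring

lemma aemeasurable_psiIterKernel (h : PsiAdmissible Ψ a t) :
    AEMeasurable (Function.uncurry (psiIterKernel Ψ α β t))
      ((volume.restrict (Ioc a t)).prod (volume.restrict (Ioc a t))) := by
  have hfst := h.aemeasurable.comp_quasiMeasurePreserving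
    (Measure.quasiMeasurePreserving_fst (ν := volume.restrict (Ioc a t)))
  have hsnd := h.aemeasurable.comp_quasiMeasurePreserving
    (Measure.quasiMeasurePreserving_snd (μ := volume.restrict (Ioc a t)))
  have hderiv := measurable_deriv Ψ
  exact ((hderiv.comp measurable_fst).aemeasurable.mul
      (((hfst.const_sub (Ψ t)).pow_const (α - 1)).div_const _)).mul
    ((hderiv.comp measurable_snd).aemeasurable.mul
      (((hfst.sub hsnd).pow_const (β - 1)).div_const _))

end PsiAdmissible

lemma kernel_mul_psiFracInt (hβ : β ≠ 0) (r : ℝ) :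
    deriv Ψ r * psiPower Ψ r α t * psiFracInt Ψ a β f r =
      ∫ s in a..r, psiIterKernel Ψ α β t r s * f s := by
  rw [psiFracInt_eq_integral hβ, ← intervalIntegral.integral_const_mul]
  simp only [psiIterKernel, mul_assoc]

namespace PsiFracIntegrable

lemma integrable_psiIterKernel_mul (hf : PsiFracIntegrable Ψ a (α + β) f t)
    (h : PsiAdmissible Ψ a t) (hat : a ≤ t) (hα : 0 < α) (hβ : 0 < β) :
    Integrable ({z : ℝ × ℝ | z.2 < z.1}.indicator
        (Function.uncurry fun r s => psiIterKernel Ψ α β t r s * f s))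
      ((volume.restrict (Ioc a t)).prod (volume.restrict (Ioc a t))) := by
  refine integrable_indicator_triangle ?_ (fun s hs => ?_) ?_
  · exact (h.aemeasurable_psiIterKernel.mul
      ((hf.aemeasurable h (add_pos hα hβ)).comp_quasiMeasurePreserving
        Measure.quasiMeasurePreserving_snd)).aestronglyMeasurable
  · exact ((h.mono hs.1.le le_rfl).intervalIntegrable_psiIterKernel hs.2 hα hβ).mul_const (f s)
  · refine hf.norm.congr_uIoo fun s hs => ?_
    rw [uIoo_of_le hat] at hs
    have hs' := h.mono hs.1.le le_rfl
    calc ‖deriv Ψ s * psiPower Ψ s (α + β) t * f s‖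
        = (∫ r in s..t, psiIterKernel Ψ α β t r s) * ‖f s‖ := by
          rw [hs'.integral_psiIterKernel hs.2 hα hβ, norm_mul,
            Real.norm_of_nonneg (h.kernel_pos hs (add_pos hα hβ)).le]
      _ = ∫ r in s..t, psiIterKernel Ψ α β t r s * ‖f s‖ :=
          (intervalIntegral.integral_mul_const _ _).symm
      _ = ∫ r in s..t, ‖psiIterKernel Ψ α β t r s * f s‖ :=
          intervalIntegral.integral_congr_Ioo_of_le hs.2.le fun r hr => by
            simp only [norm_mul, Real.norm_of_nonneg (h.psiIterKernel_pos hα hβ hs hr).le]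

lemma comp_psiFracInt (hf : PsiFracIntegrable Ψ a (α + β) f t) (h : PsiAdmissible Ψ a t)
    (hat : a ≤ t) (hα : 0 < α) (hβ : 0 < β) : PsiFracIntegrable Ψ a α (psiFracInt Ψ a β f) t := by
  simp only [PsiFracIntegrable, kernel_mul_psiFracInt hβ.ne']
  exact intervalIntegrable_integral_triangle hat (hf.integrable_psiIterKernel_mul h hat hα hβ)

lemma psiFracInt_psiFracInt (hf : PsiFracIntegrable Ψ a (α + β) f t) (h : PsiAdmissible Ψ a t)
    (hat : a ≤ t) (hα : 0 < α) (hβ : 0 ≤ β) :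
    psiFracInt Ψ a α (psiFracInt Ψ a β f) t = psiFracInt Ψ a (α + β) f t := by
  obtain rfl | hβ := hβ.eq_or_lt
  · rw [psiFracInt_zero, add_zero]
  · rw [psiFracInt_eq_integral hα.ne', psiFracInt_eq_integral (add_pos hα hβ).ne']
    simp only [kernel_mul_psiFracInt hβ.ne']
    rw [integral_integral_swap_triangle hat (hf.integrable_psiIterKernel_mul h hat hα hβ)]
    refine intervalIntegral.integral_congr_Ioo_of_le hat fun s hs => ?_
    simp only [intervalIntegral.integral_mul_const,
      (h.mono hs.1.le le_rfl).integral_psiIterKernel hs.2 hα hβ]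

end PsiFracIntegrable

end Semigroup

section OrderOne

variable {Ψ : ℝ → ℝ} {a b : ℝ} {f : ℝ → ℝ}

lemma PsiFracIntegrable.tendsto_psiFracInt_one (hf : PsiFracIntegrable Ψ a 1 f b) (hab : a < b) :
    Tendsto (psiFracInt Ψ a 1 f) (𝓝[>] a) (𝓝 0) := by
  have hcont := intervalIntegral.continuousOn_primitive_interval'
    (psiFracIntegrable_one_iff.1 hf) left_mem_uIcc a left_mem_uIcc
  rw [uIcc_of_le hab.le] at hcont
  have hlim := (hcont.mono Ioc_subset_Icc_self).tendsto
  rw [nhdsWithin_Ioc_eq_nhdsGT hab, intervalIntegral.integral_same] at hlim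
  exact hlim.congr fun t => psiFracInt_one_eq_integral.symm

lemma PsiFracIntegrable.ae_hasDerivAt_psiFracInt_one (hf : PsiFracIntegrable Ψ a 1 f b) :
    ∀ᵐ r ∂volume.restrict (uIoc a b),
      HasDerivAt (psiFracInt Ψ a 1 f) (deriv Ψ r * f r) r := by
  have hprim : psiFracInt Ψ a 1 f = fun t => ∫ s in a..t, deriv Ψ s * f s :=
    funext fun _ => psiFracInt_one_eq_integral
  rw [hprim]
  refine (ae_restrict_iff' measurableSet_uIoc).2 ?_
  filter_upwards [(psiFracIntegrable_one_iff.1 hf).ae_hasDerivAt_integral] with r hr hmem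
  exact hr (uIoc_subset_uIcc hmem) a left_mem_uIcc

end OrderOne

/-- The function `x` equals `c • psiPower Ψ a ξ + psiFracInt Ψ a ξ h` on `(a, b]`, with convergent
integrals. Then `c` is the initial value of the fractional integral of `x` of order `1 - ξ`, and
`h` is its Riemann–Liouville derivative of order `ξ`. -/
structure PsiFracRepr (Ψ : ℝ → ℝ) (a b ξ : ℝ) (x h : ℝ → ℝ) (c : ℝ) : Prop where
  integrable : ∀ t ∈ Ioc a b, PsiFracIntegrable Ψ a ξ h t
  eq_add : ∀ t ∈ Ioc a b, x t = c * psiPower Ψ a ξ t + psiFracInt Ψ a ξ h t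

namespace PsiFracRepr

variable {Ψ : ℝ → ℝ} {a b t ξ c : ℝ} {x h : ℝ → ℝ}

lemma integrable_one (hx : PsiFracRepr Ψ a b ξ x h c) (hΨ : PsiAdmissible Ψ a b) (hξ0 : 0 < ξ)
    (hξ1 : ξ ≤ 1) (ht : t ∈ Ioc a b) : PsiFracIntegrable Ψ a 1 h t := by
  simpa only [add_sub_cancel] using (hx.integrable t ht).add_order (hΨ.mono le_rfl ht.2) ht.1.le
    hξ0 (sub_nonneg.2 hξ1)

lemma psiFracInt_one_sub (hx : PsiFracRepr Ψ a b ξ x h c) (hΨ : PsiAdmissible Ψ a b) (hξ0 : 0 < ξ)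
    (hξ1 : ξ ≤ 1) (ht : t ∈ Ioc a b) :
    psiFracInt Ψ a (1 - ξ) x t = c + psiFracInt Ψ a 1 h t := by
  obtain rfl | hξ1' := hξ1.eq_or_lt
  · rw [sub_self, psiFracInt_zero, hx.eq_add t ht, psiPower_one, mul_one]
  have hγ : 0 < 1 - ξ := sub_pos.2 hξ1'
  have hΨt := hΨ.mono le_rfl ht.2
  have hone : PsiFracIntegrable Ψ a (1 - ξ + ξ) h t := by
    simpa only [sub_add_cancel] using hx.integrable_one hΨ hξ0 hξ1 ht
  have hrepr : x =ᵐ[volume.restrict (uIoc a t)]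
      fun s => c * psiPower Ψ a ξ s + psiFracInt Ψ a ξ h s := by
    rw [uIoc_of_le ht.1.le]
    exact ae_restrict_of_forall_mem measurableSet_Ioc fun s hs =>
      hx.eq_add s ⟨hs.1, hs.2.trans ht.2⟩
  rw [psiFracInt_congr_ae hγ.ne' hrepr,
    (hΨt.psiFracIntegrable_psiPower ht.1 hγ hξ0).psiFracInt_const_mul_add
      (hone.comp_psiFracInt hΨt ht.1.le hγ hξ0),
    hΨt.psiFracInt_psiPower ht.1 hγ hξ0, hone.psiFracInt_psiFracInt hΨt ht.1.le hγ hξ0.le,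
    sub_add_cancel, psiPower_one, mul_one]

lemma tendsto_psiFracInt_one_sub (hx : PsiFracRepr Ψ a b ξ x h c) (hΨ : PsiAdmissible Ψ a b)
    (hab : a < b) (hξ0 : 0 < ξ) (hξ1 : ξ ≤ 1) :
    Tendsto (psiFracInt Ψ a (1 - ξ) x) (𝓝[>] a) (𝓝 c) := by
  have hone := hx.integrable_one hΨ hξ0 hξ1 (right_mem_Ioc.2 hab)
  refine (by simpa only [add_zero] using (hone.tendsto_psiFracInt_one hab).const_add c :
    Tendsto (fun t => c + psiFracInt Ψ a 1 h t) (𝓝[>] a) (𝓝 c)).congr' ?_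
  filter_upwards [Ioc_mem_nhdsGT hab] with t ht
  exact (hx.psiFracInt_one_sub hΨ hξ0 hξ1 ht).symm

lemma ae_eq_deriv_psiFracInt_one_sub (hx : PsiFracRepr Ψ a b ξ x h c) (hΨ : PsiAdmissible Ψ a b)
    (hξ0 : 0 < ξ) (hξ1 : ξ ≤ 1) (ht : t ∈ Ioc a b) :
    h =ᵐ[volume.restrict (uIoc a t)]
      fun r => 1 / deriv Ψ r * deriv (psiFracInt Ψ a (1 - ξ) x) r := by
  have hderiv := (hx.integrable_one hΨ hξ0 hξ1 ht).ae_hasDerivAt_psiFracInt_one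
  rw [uIoc_of_le ht.1.le] at hderiv ⊢
  filter_upwards [hderiv, ae_restrict_Ioc_of_forall_Ioo fun r hr => hr] with r hr hrI
  have hev : psiFracInt Ψ a (1 - ξ) x =ᶠ[𝓝 r] fun t => c + psiFracInt Ψ a 1 h t := by
    filter_upwards [isOpen_Ioo.mem_nhds hrI] with u hu
    exact hx.psiFracInt_one_sub hΨ hξ0 hξ1 ⟨hu.1, hu.2.le.trans ht.2⟩
  have hΨr := (hΨ.deriv_pos r ⟨hrI.1, hrI.2.trans_le ht.2⟩).ne'
  rw [((hr.const_add c).congr_of_eventuallyEq hev).deriv]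
  field_simp

theorem psiFracInt_psiHilferDeriv_eq_sub {μ η : ℝ} (hx : PsiFracRepr Ψ a b ξ x h c)
    (hΨ : PsiAdmissible Ψ a b) (hμ0 : 0 < μ) (hμ1 : μ ≤ 1) (hη0 : 0 ≤ η) (hη1 : η ≤ 1)
    (hξ : ξ = μ + η * (1 - μ)) (ht : t ∈ Ioc a b) :
    psiFracInt Ψ a μ (psiHilferDeriv Ψ a μ η x) t = x t - c * psiPower Ψ a ξ t := by
  have hδ : 0 ≤ η * (1 - μ) := mul_nonneg hη0 (sub_nonneg.2 hμ1)
  have hξ0 : 0 < ξ := hξ ▸ add_pos_of_pos_of_nonneg hμ0 hδ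
  have hξ1 : ξ ≤ 1 := by nlinarith
  have hγ : (1 - η) * (1 - μ) = 1 - ξ := by rw [hξ]; ring
  have hae := hx.ae_eq_deriv_psiFracInt_one_sub hΨ hξ0 hξ1 ht
  calc psiFracInt Ψ a μ (psiHilferDeriv Ψ a μ η x) t
      = psiFracInt Ψ a μ (psiFracInt Ψ a (η * (1 - μ))
          fun r => 1 / deriv Ψ r * deriv (psiFracInt Ψ a (1 - ξ) x) r) t := by
        rw [← hγ]
        rfl
    _ = psiFracInt Ψ a ξ (fun r => 1 / deriv Ψ r * deriv (psiFracInt Ψ a (1 - ξ) x) r) t := by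
        rw [PsiFracIntegrable.psiFracInt_psiFracInt (hξ ▸ (hx.integrable t ht).congr_ae hae)
          (hΨ.mono le_rfl ht.2) ht.1.le hμ0 hδ, ← hξ]
    _ = psiFracInt Ψ a ξ h t := (psiFracInt_congr_ae hξ0.ne' hae).symm
    _ = x t - c * psiPower Ψ a ξ t := by rw [hx.eq_add t ht, add_sub_cancel_left]

lemma of_add_order {γ : ℝ} (hx : PsiFracRepr Ψ a b (ξ + γ) x h c) (hΨ : PsiAdmissible Ψ a b)
    (hξ : 0 < ξ) (hγ : 0 < γ) :
    PsiFracRepr Ψ a b ξ x (fun s => c * psiPower Ψ a γ s + psiFracInt Ψ a γ h s) 0 := by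
  have hpow : ∀ t ∈ Ioc a b, PsiFracIntegrable Ψ a ξ (psiPower Ψ a γ) t := fun t ht =>
    (hΨ.mono le_rfl ht.2).psiFracIntegrable_psiPower ht.1 hξ hγ
  have hint : ∀ t ∈ Ioc a b, PsiFracIntegrable Ψ a ξ (psiFracInt Ψ a γ h) t := fun t ht =>
    (hx.integrable t ht).comp_psiFracInt (hΨ.mono le_rfl ht.2) ht.1.le hξ hγ
  refine ⟨fun t ht => (hpow t ht).const_mul_add (hint t ht), fun t ht => ?_⟩
  have hΨt := hΨ.mono le_rfl ht.2
  rw [(hpow t ht).psiFracInt_const_mul_add (hint t ht), hΨt.psiFracInt_psiPower ht.1 hξ hγ,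
    (hx.integrable t ht).psiFracInt_psiFracInt hΨt ht.1.le hξ hγ.le, zero_mul, zero_add,
    hx.eq_add t ht]

end PsiFracRepr

section AbsolutelyContinuous

variable {Ψ : ℝ → ℝ} {a b ξ : ℝ} {x : ℝ → ℝ}

lemma absolutelyContinuousOnInterval_of_intervalIntegrable_deriv (hcont : ContinuousOn x (uIcc a b))
    (hdiff : ∀ t ∈ uIoo a b, DifferentiableAt ℝ x t)
    (hint : IntervalIntegrable (deriv x) volume a b) : AbsolutelyContinuousOnInterval x a b := by
  have hFTC : ∀ t ∈ uIcc a b, ∫ s in a..t, deriv x s = x t - x a := fun t ht =>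
    have hsub := uIcc_subset_uIcc_left ht
    intervalIntegral.integral_deriv_eq_sub_uIoo (hcont.mono hsub)
      (fun s hs => hdiff s (Ioo_subset_Ioo (le_min inf_le_left ht.1) (max_le le_sup_left ht.2) hs))
      (hint.mono_set hsub)
  refine (hint.absolutelyContinuousOnInterval_intervalIntegral left_mem_uIcc).congr' ?_
  filter_upwards [mem_inf_of_right (mem_principal_self _)] with E hE
  refine Finset.sum_congr rfl fun i hi => ?_
  simp only [hFTC _ (hE.1 i hi).1, hFTC _ (hE.1 i hi).2, dist_sub_right]

lemma psiFracRepr_one_of_absolutelyContinuousOnInterval (hΨ : PsiAdmissible Ψ a b)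
    (hx : AbsolutelyContinuousOnInterval x a b) :
    PsiFracRepr Ψ a b 1 x (fun s => deriv x s / deriv Ψ s) (x a) := by
  have hcancel : ∀ t ∈ Ioc a b,
      EqOn (fun s => deriv Ψ s * (deriv x s / deriv Ψ s)) (deriv x) (Ioo a t) := fun t ht s hs =>
    mul_div_cancel₀ _ (hΨ.deriv_pos s ⟨hs.1, hs.2.trans_le ht.2⟩).ne'
  have hxt : ∀ t ∈ Ioc a b, AbsolutelyContinuousOnInterval x a t := fun t ht =>
    hx.mono (uIcc_subset_uIcc_left (Icc_subset_uIcc (Ioc_subset_Icc_self ht)))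
  refine ⟨fun t ht => ?_, fun t ht => ?_⟩
  · rw [psiFracIntegrable_one_iff]
    refine (hxt t ht).intervalIntegrable_deriv.congr_uIoo ?_
    rw [uIoo_of_le ht.1.le]
    exact (hcancel t ht).symm
  · rw [psiPower_one, psiFracInt_one_eq_integral,
      intervalIntegral.integral_congr_Ioo_of_le ht.1.le (hcancel t ht),
      (hxt t ht).integral_deriv_eq_sub]
    ring

lemma exists_psiFracRepr_of_absolutelyContinuousOnInterval (hΨ : PsiAdmissible Ψ a b)
    (hξ0 : 0 < ξ) (hξ1 : ξ ≤ 1) (hx : AbsolutelyContinuousOnInterval x a b) :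
    ∃ h c, PsiFracRepr Ψ a b ξ x h c := by
  have hrepr := psiFracRepr_one_of_absolutelyContinuousOnInterval hΨ hx
  obtain rfl | hξ1' := hξ1.eq_or_lt
  · exact ⟨_, _, hrepr⟩
  · rw [← add_sub_cancel ξ 1] at hrepr
    exact ⟨_, _, hrepr.of_add_order hΨ hξ0 (sub_pos.2 hξ1')⟩

end AbsolutelyContinuous

section WeightedC1

variable {Ψ : ℝ → ℝ} {a b ξ : ℝ} {x : ℝ → ℝ}

lemma psiAdmissible_of_monotoneOn_of_deriv_ne_zero (hΨ : MonotoneOn Ψ (Icc a b))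
    (hΨ' : ∀ t ∈ Icc a b, deriv Ψ t ≠ 0) : PsiAdmissible Ψ a b where
  continuousOn t ht :=
    (differentiableAt_of_deriv_ne_zero (hΨ' t ht)).continuousAt.continuousWithinAt
  deriv_pos t ht := by
    have hnonneg : 0 ≤ derivWithin Ψ (Icc a b) t := hΨ.derivWithin_nonneg
    rw [derivWithin_of_mem_nhds (Icc_mem_nhds ht.1 ht.2)] at hnonneg
    exact hnonneg.lt_of_ne (hΨ' t (Ioo_subset_Icc_self ht)).symm

lemma continuousOn_deriv_of_contDiffOn_of_deriv_ne_zero (hab : a < b)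
    (hΨ : ContDiffOn ℝ 1 Ψ (Icc a b)) (hΨ' : ∀ t ∈ Icc a b, deriv Ψ t ≠ 0) :
    ContinuousOn (deriv Ψ) (Icc a b) :=
  (hΨ.continuousOn_derivWithin (uniqueDiffOn_Icc hab) le_rfl).congr fun t ht =>
    ((differentiableAt_of_deriv_ne_zero (hΨ' t ht)).derivWithin (uniqueDiffOn_Icc hab t ht)).symm

lemma intervalIntegrable_of_continuousOn_rpow_mul {f : ℝ → ℝ}
    (hΨ : MonotoneOn Ψ (Icc a b)) (hab : a < b) (hcont : ContinuousOn (deriv Ψ) (Icc a b))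
    (hΨ' : ∀ t ∈ Icc a b, deriv Ψ t ≠ 0) (hξ : 0 < ξ)
    (hf : ContinuousOn (fun t => (Ψ t - Ψ a) ^ (1 - ξ) * f t) (Icc a b)) :
    IntervalIntegrable f volume a b := by
  have hadm := psiAdmissible_of_monotoneOn_of_deriv_ne_zero hΨ hΨ'
  have hquot : ContinuousOn
      (fun t => Real.Gamma ξ * ((Ψ t - Ψ a) ^ (1 - ξ) * f t) / deriv Ψ t) (uIcc a b) := by
    rw [uIcc_of_le hab.le]
    exact (continuousOn_const.mul hf).div hcont hΨ'
  refine ((psiFracIntegrable_one_iff.1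
    (hadm.psiFracIntegrable_psiPower hab one_pos hξ)).continuousOn_mul hquot).congr_uIoo
      fun t ht => ?_
  rw [uIoo_of_le hab.le] at ht
  have hder := (hadm.deriv_pos t ht).ne'
  have hGamma := (Real.Gamma_pos_of_pos hξ).ne'
  have hrpow : (Ψ t - Ψ a) ^ (1 - ξ) * (Ψ t - Ψ a) ^ (ξ - 1) = 1 := by
    rw [← Real.rpow_add ((hadm.mono le_rfl ht.2.le).sub_pos ht.1), sub_add_sub_cancel', sub_self,
      Real.rpow_zero]
  simp only [psiPower]
  field_simp
  linear_combination f t * hrpow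

lemma absolutelyContinuousOnInterval_of_continuousOn_rpow_mul_deriv
    (hΨ : MonotoneOn Ψ (Icc a b)) (hab : a < b) (hcont : ContinuousOn (deriv Ψ) (Icc a b))
    (hΨ' : ∀ t ∈ Icc a b, deriv Ψ t ≠ 0) (hξ : 0 < ξ) (hx : ContinuousOn x (Icc a b))
    (hdiff : DifferentiableOn ℝ x (Ioo a b))
    (hx' : ContinuousOn (fun t => (Ψ t - Ψ a) ^ (1 - ξ) * deriv x t) (Icc a b)) :
    AbsolutelyContinuousOnInterval x a b := by
  refine absolutelyContinuousOnInterval_of_intervalIntegrable_deriv ?_ ?_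
    (intervalIntegrable_of_continuousOn_rpow_mul hΨ hab hcont hΨ' hξ hx')
  · rwa [uIcc_of_le hab.le]
  · rw [uIoo_of_le hab.le]
    exact fun t ht => hdiff.differentiableAt (isOpen_Ioo.mem_nhds ht)

end WeightedC1

theorem psiFracInt_psiHilferDeriv_general {Ψ x : ℝ → ℝ} {a b μ η ξ c : ℝ}
    (hΨ : PsiAdmissible Ψ a b)
    (hμ0 : 0 < μ) (hμ1 : μ ≤ 1) (hη0 : 0 ≤ η) (hη1 : η ≤ 1) (hξ : ξ = μ + η * (1 - μ))
    (hx : AbsolutelyContinuousOnInterval x a b)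
    (hc : Tendsto (psiFracInt Ψ a ((1 - η) * (1 - μ)) x) (𝓝[>] a) (𝓝 c)) :
    ∀ t ∈ Ioc a b, psiFracInt Ψ a μ (psiHilferDeriv Ψ a μ η x) t =
      x t - ((Ψ t - Ψ a) ^ (ξ - 1) / Real.Gamma ξ) * c := by
  intro t ht
  have hξ0 : 0 < ξ := by nlinarith
  have hξ1 : ξ ≤ 1 := by nlinarith
  obtain ⟨h, d, hrepr⟩ := exists_psiFracRepr_of_absolutelyContinuousOnInterval hΨ hξ0 hξ1 hx
  have hlim := hrepr.tendsto_psiFracInt_one_sub hΨ (ht.1.trans_le ht.2) hξ0 hξ1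
  have hγ : (1 - η) * (1 - μ) = 1 - ξ := by rw [hξ]; ring
  obtain rfl : c = d := tendsto_nhds_unique (hγ ▸ hc) hlim
  rw [hrepr.psiFracInt_psiHilferDeriv_eq_sub hΨ hμ0 hμ1 hη0 hη1 hξ ht, mul_comm, psiPower]

/-- Fundamental theorem for the Ψ-Hilfer derivative:
`I^{μ,Ψ}_{a+} D^{μ,η,Ψ}_{a+} x(t) = x(t) - ((Ψ(t)-Ψ(a))^{ξ-1}/Γ(ξ)) I^{(1-η)(1-μ),Ψ}_{a+} x(a⁺)`
for `x ∈ C¹_{1-ξ,Ψ}([a,b],ℝ)`, where `ξ = μ + η(1-μ)`. -/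
theorem psiFracInt_psiHilferDeriv (Ψ : ℝ → ℝ) (a b μ η ξ c : ℝ) (x : ℝ → ℝ) (hab : a < b)
    (hΨC1 : ContDiffOn ℝ 1 Ψ (Icc a b)) (hΨmono : StrictMonoOn Ψ (Icc a b))
    (hΨ' : ∀ t ∈ Icc a b, deriv Ψ t ≠ 0)
    (hμ0 : 0 < μ) (hμ1 : μ ≤ 1) (hη0 : 0 ≤ η) (hη1 : η ≤ 1)
    (hξ : ξ = μ + η * (1 - μ))
    (hx_cont : ContinuousOn x (Icc a b))
    (hx_diff : DifferentiableOn ℝ x (Ioc a b))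
    (hx'_weighted : ContinuousOn (fun t => (Ψ t - Ψ a) ^ (1 - ξ) * deriv x t) (Icc a b))
    (hc : Tendsto (psiFracInt Ψ a ((1 - η) * (1 - μ)) x) (𝓝[>] a) (𝓝 c)) :
    ∀ t ∈ Ioc a b,
      psiFracInt Ψ a μ (psiHilferDeriv Ψ a μ η x) t =
        x t - ((Ψ t - Ψ a) ^ (ξ - 1) / Real.Gamma ξ) * c := by
  have hadm := psiAdmissible_of_monotoneOn_of_deriv_ne_zero hΨmono.monotoneOn hΨ'
  exact psiFracInt_psiHilferDeriv_general hadm hμ0 hμ1 hη0 hη1 hξ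
    (absolutelyContinuousOnInterval_of_continuousOn_rpow_mul_deriv hΨmono.monotoneOn hab
      (continuousOn_deriv_of_contDiffOn_of_deriv_ne_zero hab hΨC1 hΨ') hΨ' (by nlinarith) hx_cont
      (hx_diff.mono Ioo_subset_Ioc_self) hx'_weighted) hc
end
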